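/- Let H₁, H₂ be separable Hilbert spaces, x an H₁-valued random variable with covariance operator L_C = E[x ⊗ x], whose orthonormal eigenvectors are φ_k with eigenvalues λ_k, and ε = ε₁ f₁ with ε₁ ~ N(0, σ²) independent of x, where f₁ is a fixed unit vector in H₂. For β ∈ H₁, let ρ_β be the law of (x, y) with y = ⟨β, x⟩ f₁ + ε. Then for β_i, β_j ∈ H₁, the Kullback–Leibler divergence satisfies D_{kl}(ρ_{β_i}^{⊗T} ‖ ρ_{β_j}^{⊗T}) = (T/(2σ²)) ‖L_C^{1/2}(β_i − β_j)‖². -/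

import Mathlib

open MeasureTheory ProbabilityTheory
open scoped RealInnerProductSpace NNReal

/-- The Kullback–Leibler divergence `∫ log (dρ₁/dρ₂) dρ₁` (meaningful when `ρ₁ ≪ ρ₂` and the
log-density is integrable). -/
noncomputable def klDivergence {α : Type} [MeasurableSpace α] (ρ₁ ρ₂ : Measure α) : ℝ :=
  ∫ z, Real.log ((ρ₁.rnDeriv ρ₂ z).toReal) ∂ρ₁

/-- log-likelihood ratio of two Gaussians with the same variance. -/
noncomputable def gaussLLR (v a b t : ℝ) : ℝ := ((t - b) ^ 2 - (t - a) ^ 2) / (2 * v)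

lemma gaussLLR_lintegral (v : ℝ≥0) (hv : v ≠ 0) (a b : ℝ) (h : ℝ → ENNReal) (hh : Measurable h) :
    ∫⁻ e, h (a + e) ∂(gaussianReal 0 v)
      = ∫⁻ e, ENNReal.ofReal (Real.exp (gaussLLR v a b (b + e))) * h (b + e)
          ∂(gaussianReal 0 v) := by
  have key : ∀ (c : ℝ) (k : ℝ → ENNReal), Measurable k →
      ∫⁻ e, k (c + e) ∂(gaussianReal 0 v) = ∫⁻ e, gaussianPDF c v e * k e := by
    intro c k hk
    have h1 : ∫⁻ e, k (c + e) ∂(gaussianReal 0 v) = ∫⁻ e, k e ∂(gaussianReal c v) := by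
      have := gaussianReal_map_const_add (μ := 0) (v := v) c
      rw [zero_add] at this
      rw [← this, lintegral_map hk (by fun_prop)]
    rw [h1, gaussianReal_of_var_ne_zero _ hv,
      lintegral_withDensity_eq_lintegral_mul _ (measurable_gaussianPDF c v) hk]
    rfl
  have hm : Measurable (fun t => ENNReal.ofReal (Real.exp (gaussLLR v a b t)) * h t) := by
    unfold gaussLLR; fun_prop
  rw [key a h hh, key b _ hm]
  refine lintegral_congr fun e => ?_
  rw [← mul_assoc]
  congr 1
  rw [gaussianPDF, gaussianPDF, ← ENNReal.ofReal_mul (gaussianPDFReal_nonneg _ _ _)]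
  congr 1
  rw [gaussianPDFReal, gaussianPDFReal, mul_assoc (√(2 * Real.pi * v))⁻¹, ← Real.exp_add]
  congr 2
  unfold gaussLLR
  ring

lemma pi_eq_withDensity {α : Type} [MeasurableSpace α] (T : ℕ) (ρ₁ ρ₂ : Measure α)
    [IsProbabilityMeasure ρ₁] [IsProbabilityMeasure ρ₂] (g : α → ENNReal) (hg : Measurable g)
    (h : ρ₁ = ρ₂.withDensity g) :
    (Measure.pi fun _ : Fin T => ρ₁)
      = (Measure.pi fun _ : Fin T => ρ₂).withDensity (fun z => ∏ k, g (z k)) := by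
  symm
  refine (Measure.pi_eq fun s hs => ?_).symm
  rw [withDensity_apply _ (MeasurableSet.univ_pi hs),
    ← lintegral_indicator (MeasurableSet.univ_pi hs)]
  have h1 : ∀ z : Fin T → α, (Set.univ.pi s).indicator (fun z => ∏ k, g (z k)) z
      = ∏ k, (s k).indicator g (z k) := by
    intro z
    by_cases hz : z ∈ Set.univ.pi s
    · rw [Set.indicator_of_mem hz]
      refine Finset.prod_congr rfl fun k _ => ?_
      rw [Set.indicator_of_mem (hz k (Set.mem_univ k))]
    · rw [Set.indicator_of_notMem hz]
      simp only [Set.mem_pi, Set.mem_univ, true_imp_iff, not_forall] at hz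
      obtain ⟨k, hk⟩ := hz
      exact (Finset.prod_eq_zero (Finset.mem_univ k) (Set.indicator_of_notMem hk g)).symm
  simp_rw [h1]
  have hm : ∀ k, Measurable ((s k).indicator g) := fun k => hg.indicator (hs k)
  rw [lintegral_prod_eq_prod_lintegral_of_indepFun Finset.univ
    (fun k (z : Fin T → α) => (s k).indicator g (z k))
    (iIndepFun_pi (μ := fun _ : Fin T => ρ₂) (X := fun k => (s k).indicator g)
      fun k => (hm k).aemeasurable)
    (fun k => (hm k).comp (measurable_pi_apply k))]
  refine Finset.prod_congr rfl fun k _ => ?_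
  rw [h, withDensity_apply _ (hs k), ← lintegral_indicator (hs k)]
  exact (measurePreserving_eval (fun _ : Fin T => ρ₂) k).lintegral_comp (hm k)

lemma klDivergence_pi {α : Type} [MeasurableSpace α] (T : ℕ) (ρ₁ ρ₂ : Measure α)
    [IsProbabilityMeasure ρ₁] [IsProbabilityMeasure ρ₂] (l : α → ℝ) (hl : Measurable l)
    (h : ρ₁ = ρ₂.withDensity (fun z => ENNReal.ofReal (Real.exp (l z))))
    (hint : Integrable l ρ₁) :
    klDivergence (Measure.pi fun _ : Fin T => ρ₁) (Measure.pi fun _ : Fin T => ρ₂)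
      = T * ∫ z, l z ∂ρ₁ := by
  have hd := pi_eq_withDensity T ρ₁ ρ₂ _ (by fun_prop) h
  have hac : (Measure.pi fun _ : Fin T => ρ₁) ≪ (Measure.pi fun _ : Fin T => ρ₂) := by
    rw [hd]; exact withDensity_absolutelyContinuous _ _
  have hrn := Measure.rnDeriv_withDensity (Measure.pi fun _ : Fin T => ρ₂)
    (f := fun z : Fin T → α => ∏ k, ENNReal.ofReal (Real.exp (l (z k)))) (by fun_prop)
  rw [← hd] at hrn
  unfold klDivergence
  have h2 : ∫ z, Real.log (((Measure.pi fun _ : Fin T => ρ₁).rnDeriv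
        (Measure.pi fun _ : Fin T => ρ₂) z).toReal) ∂(Measure.pi fun _ : Fin T => ρ₁)
      = ∫ z, ∑ k, l (z k) ∂(Measure.pi fun _ : Fin T => ρ₁) := by
    refine integral_congr_ae ?_
    filter_upwards [hac.ae_le hrn] with z hz
    rw [hz, ENNReal.toReal_prod]
    simp_rw [ENNReal.toReal_ofReal (Real.exp_pos _).le]
    rw [← Real.exp_sum, Real.log_exp]
  rw [h2, integral_finsetSum _ fun k _ => integrable_comp_eval (μ := fun _ : Fin T => ρ₁) hint]
  have h3 : ∀ k : Fin T, ∫ z : Fin T → α, l (z k) ∂(Measure.pi fun _ : Fin T => ρ₁)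
      = ∫ z, l z ∂ρ₁ := fun k =>
    integral_comp_eval (μ := fun _ : Fin T => ρ₁) hint.aestronglyMeasurable
  simp [h3]

/-- for the scalar-output Gaussian model `y = ⟪β, x⟫ f₁ + ε` with
`ε = ε₁ f₁`, `ε₁ ~ N(0, σ²)` independent of `x`, the KL divergence between the `T`-fold
products of the laws `ρ_{β_i}`, `ρ_{β_j}` of `(x, y)` equals
`(T/(2σ²)) ‖L_C^{1/2}(β_i - β_j)‖²`, where `L_C = E[x ⊗ x]` and `R = L_C^{1/2}` is its
positive square root. -/
theorem stmt_17 {H₁ H₂ : Type} [NormedAddCommGroup H₁] [InnerProductSpace ℝ H₁]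
    [CompleteSpace H₁] [SecondCountableTopology H₁] [MeasurableSpace H₁] [BorelSpace H₁]
    [NormedAddCommGroup H₂] [InnerProductSpace ℝ H₂] [CompleteSpace H₂]
    [SecondCountableTopology H₂] [MeasurableSpace H₂] [BorelSpace H₂]
    {Ω : Type} [MeasurableSpace Ω] (μ : Measure Ω) [IsProbabilityMeasure μ]
    (x : Ω → H₁) (hx : Measurable x) (hx2 : Integrable (fun ω => ‖x ω‖ ^ 2) μ)
    (ε₁ : Ω → ℝ) (hε₁ : Measurable ε₁)
    (σ : ℝ≥0) (hσ : σ ≠ 0)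
    (hlaw : Measure.map ε₁ μ = gaussianReal 0 (σ ^ 2))
    (hindep : IndepFun x ε₁ μ)
    (f₁ : H₂) (hf₁ : ‖f₁‖ = 1)
    (LC R : H₁ →L[ℝ] H₁)
    (hLC : ∀ f g : H₁, ⟪LC f, g⟫ = ∫ ω, ⟪x ω, f⟫ * ⟪x ω, g⟫ ∂μ)
    (hRpos : R.IsPositive) (hRsq : R ∘L R = LC)
    (T : ℕ) (βi βj : H₁)
    (ρi ρj : Measure (H₁ × H₂)) [IsProbabilityMeasure ρi] [IsProbabilityMeasure ρj]
    (hρi : ρi = Measure.map (fun ω => (x ω, ⟪βi, x ω⟫ • f₁ + ε₁ ω • f₁)) μ)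
    (hρj : ρj = Measure.map (fun ω => (x ω, ⟪βj, x ω⟫ • f₁ + ε₁ ω • f₁)) μ) :
    klDivergence (Measure.pi fun _ : Fin T => ρi) (Measure.pi fun _ : Fin T => ρj)
      = (T : ℝ) / (2 * (σ : ℝ) ^ 2) * ‖R (βi - βj)‖ ^ 2 := by
  have hv : σ ^ 2 ≠ 0 := pow_ne_zero _ hσ
  have hσ' : (σ : ℝ) ≠ 0 := by exact_mod_cast hσ
  have hff : ⟪f₁, f₁⟫ = (1 : ℝ) := by rw [real_inner_self_eq_norm_sq, hf₁]; norm_num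
  have hinn : ∀ a b : ℝ, ⟪f₁, a • f₁ + b • f₁⟫ = a + b := by
    intro a b; rw [inner_add_right, inner_smul_right, inner_smul_right, hff]; ring
  have hmp : Measure.map (fun ω => (x ω, ε₁ ω)) μ
      = (Measure.map x μ).prod (gaussianReal 0 (σ ^ 2)) := by
    rw [← hlaw]
    exact (indepFun_iff_map_prod_eq_prod_map_map hx.aemeasurable hε₁.aemeasurable).1 hindep
  have hpx : IsProbabilityMeasure (Measure.map x μ) :=
    Measure.isProbabilityMeasure_map hx.aemeasurable
  have hmΦ : ∀ β : H₁, Measurable (fun ω => (x ω, ⟪β, x ω⟫ • f₁ + ε₁ ω • f₁)) := by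
    intro β; fun_prop
  -- the lintegral formula
  have hlint : ∀ (β : H₁) (F : H₁ × H₂ → ENNReal), Measurable F →
      ∫⁻ z, F z ∂(Measure.map (fun ω => (x ω, ⟪β, x ω⟫ • f₁ + ε₁ ω • f₁)) μ)
        = ∫⁻ u, ∫⁻ e, F (u, (⟪β, u⟫ + e) • f₁) ∂(gaussianReal 0 (σ ^ 2)) ∂(Measure.map x μ) := by
    intro β F hF
    have hm : Measurable (fun p : H₁ × ℝ => F (p.1, (⟪β, p.1⟫ + p.2) • f₁)) := by fun_prop
    rw [lintegral_map hF (hmΦ β), ← lintegral_prod _ hm.aemeasurable, ← hmp,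
      lintegral_map hm (by fun_prop)]
    simp only [add_smul]
  let l : H₁ × H₂ → ℝ := fun z =>
    gaussLLR ((σ ^ 2 : ℝ≥0) : ℝ) ⟪βi, z.1⟫ ⟪βj, z.1⟫ ⟪f₁, z.2⟫
  have hl : Measurable l := by
    simp only [l, gaussLLR]; fun_prop
  have hdens : ρi = ρj.withDensity (fun z => ENNReal.ofReal (Real.exp (l z))) := by
    ext s hs
    rw [withDensity_apply _ hs, ← lintegral_indicator hs, ← lintegral_indicator_one hs, hρi, hρj,
      hlint _ _ (measurable_one.indicator hs), hlint _ _ (Measurable.indicator (by fun_prop) hs)]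
    refine lintegral_congr fun u => ?_
    rw [gaussLLR_lintegral (σ ^ 2) hv ⟪βi, u⟫ ⟪βj, u⟫
      (fun t => s.indicator 1 (u, t • f₁))
      ((measurable_one.indicator hs).comp (by fun_prop))]
    refine lintegral_congr fun e => ?_
    have hin : ⟪f₁, (⟪βj, u⟫ + e) • f₁⟫ = ⟪βj, u⟫ + e := by
      rw [inner_smul_right, hff, mul_one]
    by_cases hmem : (u, (⟪βj, u⟫ + e) • f₁) ∈ s
    · simp only [Set.indicator_of_mem hmem, Pi.one_apply, mul_one, l, hin]
    · simp only [Set.indicator_of_notMem hmem, mul_zero]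
  -- the integral of the log-likelihood ratio
  set δ := βi - βj with hδ
  have hlω : ∀ ω, l (x ω, ⟪βi, x ω⟫ • f₁ + ε₁ ω • f₁)
      = (1 / (2 * (σ : ℝ) ^ 2)) * (⟪x ω, δ⟫ * ⟪x ω, δ⟫)
        + (1 / (σ : ℝ) ^ 2) * (⟪x ω, δ⟫ * ε₁ ω) := by
    intro ω
    simp only [l, gaussLLR, hinn]
    rw [hδ, inner_sub_right, real_inner_comm βi, real_inner_comm βj]
    push_cast
    field_simp
    ring
  have hxL2 : MemLp x 2 μ := (memLp_two_iff_integrable_sq_norm hx.aestronglyMeasurable).2 hx2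
  have hdL2 : MemLp (fun ω => ⟪x ω, δ⟫) 2 μ := hxL2.inner_const δ
  have hi1 : Integrable (fun ω => ⟪x ω, δ⟫ * ⟪x ω, δ⟫) μ := hdL2.integrable_mul hdL2
  have hε : Integrable ε₁ μ := by
    have h1 : Integrable id (Measure.map ε₁ μ) := by
      rw [hlaw]; exact (memLp_id_gaussianReal 1).integrable (by norm_num)
    exact (integrable_map_measure (by fun_prop) hε₁.aemeasurable).1 h1
  have hε0 : ∫ ω, ε₁ ω ∂μ = 0 := by
    have h1 := integral_id_gaussianReal (μ := 0) (v := σ ^ 2)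
    rw [← hlaw, integral_map hε₁.aemeasurable (by fun_prop)] at h1
    exact h1
  have hind : IndepFun (fun ω => ⟪x ω, δ⟫) ε₁ μ :=
    hindep.comp (φ := fun u : H₁ => (⟪u, δ⟫ : ℝ)) (ψ := id) (by fun_prop) measurable_id
  have hi2 : Integrable (fun ω => ⟪x ω, δ⟫ * ε₁ ω) μ :=
    hind.integrable_mul (hdL2.integrable (by norm_num)) hε
  have hcross : ∫ ω, ⟪x ω, δ⟫ * ε₁ ω ∂μ = 0 := by
    rw [hind.integral_fun_mul_eq_mul_integral hdL2.1 hε.1, hε0, mul_zero]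
  have hint : Integrable l ρi := by
    rw [hρi, integrable_map_measure hl.aestronglyMeasurable (hmΦ βi).aemeasurable]
    refine ((hi1.const_mul (1 / (2 * (σ : ℝ) ^ 2))).add (hi2.const_mul (1 / (σ : ℝ) ^ 2))).congr ?_
    exact Filter.Eventually.of_forall fun ω => (hlω ω).symm
  have hval : ∫ z, l z ∂ρi = (1 / (2 * (σ : ℝ) ^ 2)) * ‖R δ‖ ^ 2 := by
    rw [hρi, integral_map (hmΦ βi).aemeasurable hl.aestronglyMeasurable]
    simp_rw [hlω]
    rw [integral_add (hi1.const_mul _) (hi2.const_mul _), integral_const_mul, integral_const_mul,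
      hcross, mul_zero, add_zero, ← hLC, ← hRsq, ContinuousLinearMap.comp_apply,
      ← real_inner_self_eq_norm_sq]
    congr 1
    exact hRpos.isSymmetric (R δ) δ
  rw [klDivergence_pi T ρi ρj l hl hdens hint, hval]
  ring
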